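/- Let d ≥ 1 and k ≥ 1 be integers, let h = (h₁,…,h_d) satisfy 0 < h₁ ≤ ⋯ ≤ h_d ≤ 1, and let p ∈ P_h. Then sup_{t ≥ 0} |p⁽ᵏ⁾(t)| ≤ M_{k,d} · sup_{t ≥ 0} |p(t)|, where p⁽ᵏ⁾ denotes the k-th derivative of p. (Uniform Markov–Bernstein inequality for exponential polynomials: the sharp constant over the simplex of exponents is attained when all exponents equal 1.) -/

import Mathlib

/-- The sup of `|p|` over the half-line `[0, ∞)`. -/
noncomputable def supAbs (p : ℝ → ℝ) : ℝ :=
  sSup ((fun t => |p t|) '' Set.Ici (0 : ℝ))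

/-- The space `P_h` of exponential polynomials with exponents `h₁ ≤ ⋯ ≤ h_d`:
the span of the functions `t^m * exp (-h i * t)`, where `m` is the number of
indices `j < i` with `h j = h i`.  For `h` nondecreasing this is exactly the set of
functions `t ↦ Σⱼ qⱼ(t) exp (-gⱼ t)` over the distinct values `gⱼ` of `h`, with
`deg qⱼ <` multiplicity of `gⱼ`. -/
def expPoly (d : ℕ) (h : Fin d → ℝ) : Set (ℝ → ℝ) :=
  {p | ∃ c : Fin d → ℝ, ∀ t : ℝ,
      p t = ∑ i : Fin d,
        c i * t ^ (Nat.card {j : Fin d // j < i ∧ h j = h i}) * Real.exp (-(h i) * t)}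

/-- The sharp Markov–Bernstein constant `M_{k,d}` for the Laguerre-weighted system:
the supremum of `sup_{t ≥ 0} |(e^{-t} q(t))⁽ᵏ⁾|` over real polynomials `q` of degree
at most `d - 1` with `sup_{t ≥ 0} e^{-t} |q(t)| ≤ 1`. -/
noncomputable def Mkd (k d : ℕ) : ℝ :=
  sSup {M : ℝ | ∃ q : Polynomial ℝ, q.natDegree ≤ d - 1 ∧
      supAbs (fun t => Real.exp (-t) * q.eval t) ≤ 1 ∧
      M = supAbs (iteratedDeriv k (fun t => Real.exp (-t) * q.eval t))}

/-!
Exponential polynomials with exponents `s` form the solution space of the differential equation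
`∏ g ∈ s, (d/dt + g) f = 0`, a Chebyshev space: a nonzero element has fewer than `|s|` zeros, by
Rolle's theorem applied to `e^{gt} f`. By translation it suffices to bound `p⁽ᵏ⁾(0)`. Duality and
Carathéodory's reduction turn the sharp bound at `0` for the exponents `(1, …, 1)` into a quadrature
formula `f⁽ᵏ⁾(0) = ∑ c_y f(y)` with `d` nodes `y ≥ 0` and `∑ |c_y|` arbitrarily close to the sharp
constant; the weights are `c_y = l_y⁽ᵏ⁾(0)` for the Lagrange functions `l_y` of these nodes.
Interpolating `p` at the same nodes, in its own space, it remains to see that `|l_y⁽ᵏ⁾(0)|`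
increases when one exponent increases. This is a zero count: `l_y⁽ᵏ⁾` and the difference of two
such functions have as many positive zeros as they can (a function vanishing at infinity loses no
zeros under differentiation), which determines their signs at `0`.
-/

open Polynomial Filter Topology Set ContDiff

namespace MarkovBernstein

section Duality

variable {ι E : Type*} [AddCommGroup E] [Module ℝ E]

/-- The `ℓ¹` seminorm `∑ i, |w i|` on finitely supported families of real weights. -/
noncomputable def l1Seminorm (ι : Type*) : Seminorm ℝ (ι →₀ ℝ) :=
  Seminorm.of (fun w => w.sum fun _ a => |a|)
    (fun w w' => by
      classical
      have sum_eq (u : ι →₀ ℝ) (hu : u.support ⊆ w.support ∪ w'.support) :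
          (u.sum fun _ a => |a|) = ∑ i ∈ w.support ∪ w'.support, |u i| :=
        u.sum_of_support_subset hu _ fun _ _ => abs_zero
      rw [sum_eq _ Finsupp.support_add, sum_eq _ Finset.subset_union_left,
        sum_eq _ Finset.subset_union_right, ← Finset.sum_add_distrib]
      exact Finset.sum_le_sum fun i _ => abs_add_le (w i) (w' i))
    (fun a w => by
      rw [Finsupp.sum_smul_index fun _ => abs_zero, Finsupp.sum, Finsupp.sum, Finset.mul_sum]
      exact Finset.sum_congr rfl fun i _ => abs_mul a (w i))

lemma l1Seminorm_eq_sum {w : ι →₀ ℝ} {S : Finset ι} (hS : w.support ⊆ S) :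
    l1Seminorm ι w = ∑ i ∈ S, |w i| :=
  w.sum_of_support_subset hS _ fun _ _ => abs_zero

lemma abs_sub_mul_eq_abs_sub_sign_mul {x y τ : ℝ} (hx : x ≠ 0)
    (h : τ * (SignType.sign x * y) ≤ |x|) :
    |x - τ * y| = |x| - τ * (SignType.sign x * y) := by
  rcases hx.lt_or_gt with hx | hx
  · simp only [sign_neg hx, abs_of_neg hx, SignType.coe_neg_one] at h ⊢
    rw [abs_of_nonpos (by linarith)]
    ring
  · simp only [sign_pos hx, abs_of_pos hx, SignType.coe_one] at h ⊢
    rw [abs_of_nonneg (by linarith)]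
    ring

-- Move along the relation until the first weight vanishes; the sign condition makes
-- the `ℓ¹` norm nonincreasing on the way.
lemma exists_support_ssubset_of_relation {w b : ι →₀ ℝ} (hb : b ≠ 0) (hbw : b.support ⊆ w.support)
    (hsum : 0 ≤ ∑ i ∈ w.support, SignType.sign (w i) * b i) :
    ∃ τ : ℝ, (w - τ • b).support ⊂ w.support ∧ l1Seminorm ι (w - τ • b) ≤ l1Seminorm ι w := by
  set s : ι → ℝ := fun i => SignType.sign (w i) * b i
  obtain ⟨j, hj, hsj⟩ : ∃ j ∈ w.support, 0 < s j := by
    by_contra! hs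
    obtain ⟨i, hi⟩ := Finsupp.support_nonempty_iff.mpr hb
    have hsi : s i = 0 :=
      (Finset.sum_eq_zero_iff_of_nonpos hs).mp (le_antisymm (Finset.sum_nonpos hs) hsum) i (hbw hi)
    have hsign : (SignType.sign (w i) : ℝ) = 0 :=
      (mul_eq_zero.mp hsi).resolve_right (Finsupp.mem_support_iff.mp hi)
    exact Finsupp.mem_support_iff.mp (hbw hi) (by rw [← abs_mul_sign (w i), hsign, mul_zero])
  obtain ⟨m, hm, hmin⟩ := (w.support.filter (0 < s ·)).exists_min_image (fun i => |w i| / s i)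
    ⟨j, Finset.mem_filter.mpr ⟨hj, hsj⟩⟩
  obtain ⟨hmw, hsm⟩ := Finset.mem_filter.mp hm
  set τ := |w m| / s m
  have hτ : 0 ≤ τ := by positivity
  have hτs : ∀ i ∈ w.support, τ * s i ≤ |w i| := fun i hi => by
    rcases le_or_gt (s i) 0 with hsi | hsi
    · exact (mul_nonpos_of_nonneg_of_nonpos hτ hsi).trans (abs_nonneg _)
    · exact (le_div_iff₀ hsi).mp (hmin i (Finset.mem_filter.mpr ⟨hi, hsi⟩))
  have habs : ∀ i ∈ w.support, |(w - τ • b) i| = |w i| - τ * s i := fun i hi =>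
    abs_sub_mul_eq_abs_sub_sign_mul (Finsupp.mem_support_iff.mp hi) (hτs i hi)
  have hsupp : (w - τ • b).support ⊆ w.support := by
    classical
    exact Finsupp.support_sub.trans
      (Finset.union_subset subset_rfl (Finsupp.support_smul.trans hbw))
  have hm0 : (w - τ • b) m = 0 := by
    rw [← abs_eq_zero, habs m hmw, div_mul_cancel₀ _ hsm.ne', sub_self]
  refine ⟨τ, hsupp.ssubset_of_mem_notMem hmw (Finsupp.notMem_support_iff.mpr hm0), ?_⟩
  rw [l1Seminorm_eq_sum hsupp, l1Seminorm_eq_sum subset_rfl, Finset.sum_congr rfl habs,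
    Finset.sum_sub_distrib, ← Finset.mul_sum]
  exact sub_le_self _ (mul_nonneg hτ hsum)

theorem exists_linearIndepOn_support_l1Seminorm_le (v : ι → E) (w : ι →₀ ℝ) :
    ∃ w' : ι →₀ ℝ, LinearIndepOn ℝ v w'.support ∧ l1Seminorm ι w' ≤ l1Seminorm ι w ∧
      Finsupp.linearCombination ℝ v w' = Finsupp.linearCombination ℝ v w := by
  induction hn : w.support.card using Nat.strong_induction_on generalizing w with
  | _ n ih =>
    by_cases hw : LinearIndepOn ℝ v w.support
    · exact ⟨w, hw, le_rfl, rfl⟩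
    obtain ⟨b, hbw, hb0, hb⟩ : ∃ b : ι →₀ ℝ, b.support ⊆ w.support ∧
        Finsupp.linearCombination ℝ v b = 0 ∧ b ≠ 0 := by
      simpa [linearIndepOn_iff, Finsupp.mem_supported] using hw
    wlog hsum : 0 ≤ ∑ i ∈ w.support, SignType.sign (w i) * b i generalizing b
    · refine this (-b) (by rwa [Finsupp.support_neg]) (by rw [map_neg, hb0, neg_zero])
        (neg_ne_zero.mpr hb) ?_
      simp only [Finsupp.coe_neg, Pi.neg_apply, mul_neg, Finset.sum_neg_distrib]
      linarith
    obtain ⟨τ, hlt, hle⟩ := exists_support_ssubset_of_relation hb hbw hsum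
    obtain ⟨w', hind, hle', hsum'⟩ := ih _ (hn ▸ Finset.card_lt_card hlt) _ rfl
    refine ⟨w', hind, hle'.trans hle, ?_⟩
    rw [hsum', map_sub, map_smul, hb0, smul_zero, sub_zero]

theorem gauge_le_of_forall_dual_le {A : Set E} (hconv : Convex ℝ A) (habs : Absorbent ℝ A)
    {x : E} {M : ℝ} (hM : ∀ f : Module.Dual ℝ E, (∀ a ∈ A, f a ≤ 1) → f x ≤ M) :
    gauge A x ≤ M := by
  by_cases hx : x = 0
  · simpa [hx] using hM 0 fun _ _ => zero_le_one
  have hspan (c : ℝ) : LinearPMap.mkSpanSingleton x (gauge A x) hx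
      ⟨c • x, Submodule.mem_span_singleton.mpr ⟨c, rfl⟩⟩ = c * gauge A x :=
    LinearPMap.mkSpanSingleton'_apply (σ := RingHom.id ℝ) x (gauge A x) _ c _
  obtain ⟨f, hfx, hf⟩ := exists_extension_of_le_sublinear
    (LinearPMap.mkSpanSingleton x (gauge A x) hx) (gauge A)
    (fun c hc y => gauge_smul_of_nonneg hc.le y) (gauge_add_le hconv habs) (by
      rintro ⟨y, hy⟩
      obtain ⟨c, rfl⟩ := Submodule.mem_span_singleton.mp hy
      refine (hspan c).trans_le ?_
      rcases le_or_gt 0 c with hc | hc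
      · rw [gauge_smul_of_nonneg hc, smul_eq_mul]
      · exact (mul_nonpos_of_nonpos_of_nonneg hc.le (gauge_nonneg x)).trans (gauge_nonneg _))
  have hxx : f x = gauge A x := by
    simpa using (hfx ⟨(1 : ℝ) • x, Submodule.mem_span_singleton.mpr ⟨1, rfl⟩⟩).trans (hspan 1)
  exact hxx ▸ hM f fun a ha => (hf a).trans (gauge_le_one_of_mem ha)

/-- The combinations `∑ i, w i • v i` with `∑ i, |w i| ≤ 1`. -/
def l1Hull (v : ι → E) : Set E :=
  Finsupp.linearCombination ℝ v '' (l1Seminorm ι).closedBall 0 1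

lemma smul_mem_l1Hull (v : ι → E) (i : ι) {a : ℝ} (ha : |a| ≤ 1) : a • v i ∈ l1Hull v := by
  refine ⟨Finsupp.single i a, ?_, Finsupp.linearCombination_single ..⟩
  rw [Seminorm.mem_closedBall_zero, l1Seminorm_eq_sum Finsupp.support_single_subset]
  simpa using ha

lemma convex_l1Hull (v : ι → E) : Convex ℝ (l1Hull v) :=
  ((l1Seminorm ι).convex_closedBall 0 1).linear_image _

lemma absorbent_l1Hull {v : ι → E} (hv : Submodule.span ℝ (range v) = ⊤) :
    Absorbent ℝ (l1Hull v) := by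
  rw [← Finsupp.range_linearCombination, LinearMap.range_eq_top] at hv
  refine hv.forall.mpr fun w => ?_
  filter_upwards [(l1Seminorm ι).absorbent_closedBall_zero one_pos w] with a ha
  rw [l1Hull, ← image_smul_set, ← image_singleton]
  exact image_mono ha

theorem exists_l1Seminorm_le_of_forall_dual_le {v : ι → E} (hv : Submodule.span ℝ (range v) = ⊤)
    {x : E} {M M' : ℝ} (hMM' : M < M')
    (hM : ∀ f : Module.Dual ℝ E, (∀ i, |f (v i)| ≤ 1) → f x ≤ M) :
    ∃ w : ι →₀ ℝ, LinearIndepOn ℝ v w.support ∧ l1Seminorm ι w ≤ M' ∧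
      Finsupp.linearCombination ℝ v w = x := by
  have hgauge : gauge (l1Hull v) x < M' :=
    (gauge_le_of_forall_dual_le (convex_l1Hull v) (absorbent_l1Hull hv) fun f hf =>
      hM f fun i => abs_le'.mpr
        ⟨by simpa using hf _ (smul_mem_l1Hull v i (a := 1) (by simp)),
          by simpa using hf _ (smul_mem_l1Hull v i (a := -1) (by simp))⟩).trans_lt hMM'
  obtain ⟨b, hb, hbM, _, ⟨w, hw, rfl⟩, rfl⟩ :=
    exists_lt_of_gauge_lt (absorbent_l1Hull hv) hgauge
  obtain ⟨w', hind, hle, hsum⟩ := exists_linearIndepOn_support_l1Seminorm_le v (b • w)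
  refine ⟨w', hind, hle.trans ?_, hsum.trans (map_smul _ b w)⟩
  rw [map_smul_eq_mul, Real.norm_of_nonneg hb.le]
  exact (mul_le_of_le_one_right hb.le ((l1Seminorm ι).mem_closedBall_zero.mp hw)).trans hbM.le

lemma span_range_eq_top_of_forall_eq_zero {V : Type*} [AddCommGroup V] [Module ℝ V]
    [FiniteDimensional ℝ V] {e : ι → Module.Dual ℝ V} (he : ∀ f, (∀ i, e i f = 0) → f = 0) :
    Submodule.span ℝ (range e) = ⊤ := by
  have hcoann : (Submodule.span ℝ (range e)).dualCoannihilator = ⊥ :=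
    (Submodule.eq_bot_iff _).mpr fun f hf => he f fun i =>
      (Submodule.mem_dualCoannihilator f).mp hf _ (Submodule.subset_span (mem_range_self i))
  rw [← Subspace.dualCoannihilator_dualAnnihilator_eq (W := Submodule.span ℝ (range e)), hcoann,
    Submodule.dualAnnihilator_bot]

theorem exists_quadrature_of_forall_le [Infinite ι] {V : Type*} [AddCommGroup V] [Module ℝ V]
    [FiniteDimensional ℝ V] {e : ι → Module.Dual ℝ V} (he : ∀ f, (∀ i, e i f = 0) → f = 0)
    {φ : Module.Dual ℝ V} {M M' : ℝ} (hMM' : M < M')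
    (hM : ∀ f, (∀ i, |e i f| ≤ 1) → φ f ≤ M) :
    ∃ (Y : Finset ι) (c : ι → ℝ), Y.card = Module.finrank ℝ V ∧ ∑ i ∈ Y, |c i| ≤ M' ∧
      ∀ f, φ f = ∑ i ∈ Y, c i * e i f := by
  obtain ⟨w, hindep, hw, hφ⟩ := exists_l1Seminorm_le_of_forall_dual_le
    (span_range_eq_top_of_forall_eq_zero he) (x := φ) hMM' fun F hF => by
      rw [← Module.apply_evalEquiv_symm_apply]
      refine hM _ fun i => ?_
      simpa only [Module.apply_evalEquiv_symm_apply] using hF i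
  have hcard : w.support.card ≤ Module.finrank ℝ V := by
    simpa [Subspace.dual_finrank_eq] using hindep.fintype_card_le_finrank
  obtain ⟨Y, hwY, hY⟩ := Infinite.exists_superset_card_eq w.support _ hcard
  refine ⟨Y, w, hY, l1Seminorm_eq_sum hwY ▸ hw, fun f => ?_⟩
  rw [← hφ, Finsupp.linearCombination_apply,
    Finsupp.sum_of_support_subset w hwY _ fun i _ => zero_smul ℝ (e i)]
  simp

end Duality

section RealFunctions

variable {f f' : ℝ → ℝ}

lemma supAbs_nonneg (f : ℝ → ℝ) : 0 ≤ supAbs f :=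
  Real.sSup_nonneg (forall_mem_image.mpr fun _ _ => abs_nonneg _)

lemma supAbs_le {B : ℝ} (hB : ∀ t, 0 ≤ t → |f t| ≤ B) : supAbs f ≤ B :=
  csSup_le (nonempty_Ici.image _) (forall_mem_image.mpr hB)

lemma bddAbove_abs_image_Ici_of_tendsto (hf : Continuous f) (hlim : Tendsto f atTop (𝓝 0)) :
    BddAbove ((fun t => |f t|) '' Ici (0 : ℝ)) := by
  obtain ⟨T, hT⟩ := eventually_atTop.mp (hlim.abs.eventually_lt_const (abs_zero.trans_lt one_pos))
  have hcompact : BddAbove ((fun t => |f t|) '' Icc 0 T) :=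
    isCompact_Icc.bddAbove_image hf.abs.continuousOn
  have htail : BddAbove ((fun t => |f t|) '' Ici T) :=
    ⟨1, forall_mem_image.mpr fun t ht => (hT t ht).le⟩
  refine (hcompact.union htail).mono ?_
  rw [← image_union]
  exact image_mono Ici_subset_Icc_union_Ici

lemma abs_le_supAbs (hf : Continuous f) (hlim : Tendsto f atTop (𝓝 0)) {t : ℝ} (ht : 0 ≤ t) :
    |f t| ≤ supAbs f :=
  le_csSup (bddAbove_abs_image_Ici_of_tendsto hf hlim) (mem_image_of_mem _ ht)

lemma exists_finset_deriv_eq_zero (hf : ∀ t, HasDerivAt f (f' t) t) (Z : Finset ℝ)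
    (hZ : ∀ z ∈ Z, f z = 0) :
    ∃ Z' : Finset ℝ, Z.card ≤ Z'.card + 1 ∧
      ∀ w ∈ Z', f' w = 0 ∧ ∃ a ∈ Z, ∃ b ∈ Z, w ∈ Ioo a b := by
  induction Z using Finset.induction_on_max with
  | empty => exact ⟨∅, by simp, by simp⟩
  | insert M Z hM ih =>
    obtain ⟨Z', hcard, hZ'⟩ := ih fun z hz => hZ z (Finset.mem_insert_of_mem hz)
    rcases Z.eq_empty_or_nonempty with rfl | hne
    · exact ⟨∅, by simp, by simp⟩
    have hmax := Z.max'_mem hne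
    obtain ⟨w, hw, hw0⟩ := exists_hasDerivAt_eq_zero (hM _ hmax)
      (fun t _ => (hf t).continuousAt.continuousWithinAt)
      (by rw [hZ _ (Finset.mem_insert_of_mem hmax), hZ _ (Finset.mem_insert_self _ _)])
      (fun t _ => hf t)
    have hwZ' : w ∉ Z' := fun hmem => by
      obtain ⟨_, _, _, b, hb, hwb⟩ := hZ' w hmem
      exact (hwb.2.trans_le (Z.le_max' b hb)).not_gt hw.1
    refine ⟨insert w Z', ?_, Finset.forall_mem_insert .. |>.mpr
      ⟨⟨hw0, _, Finset.mem_insert_of_mem hmax, M, Finset.mem_insert_self M Z, hw⟩, fun x hx => ?_⟩⟩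
    · rw [Finset.card_insert_of_notMem hwZ',
        Finset.card_insert_of_notMem fun hmem => (hM M hmem).false]
      lia
    · obtain ⟨hx0, a, ha, b, hb, hxab⟩ := hZ' x hx
      exact ⟨hx0, a, Finset.mem_insert_of_mem ha, b, Finset.mem_insert_of_mem hb, hxab⟩

lemma exists_deriv_eq_zero_of_tendsto (hf : ∀ t, HasDerivAt f (f' t) t)
    (hlim : Tendsto f atTop (𝓝 0)) {z : ℝ} (hz : f z = 0) : ∃ w, z < w ∧ f' w = 0 := by
  by_contra! hne
  have hcont : Continuous f := continuous_iff_continuousAt.mpr fun t => (hf t).continuousAt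
  wlog hpos : ∀ t ∈ Ioi z, 0 < f' t generalizing f f'
  · have hneg : ∀ t ∈ Ioi z, f' t < 0 :=
      (hasDerivWithinAt_forall_lt_or_forall_gt_of_forall_ne (convex_Ioi z)
        (fun t _ => (hf t).hasDerivWithinAt) hne).resolve_right hpos
    exact this (fun t => (hf t).neg) (neg_zero (G := ℝ) ▸ hlim.neg) (by simp [hz])
      (fun t ht => neg_ne_zero.mpr (hne t ht)) hcont.neg fun t ht => neg_pos.mpr (hneg t ht)
  have hmono : StrictMonoOn f (Ici z) := by
    refine strictMonoOn_of_deriv_pos (convex_Ici z) hcont.continuousOn fun t ht => ?_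
    rw [interior_Ici] at ht
    exact (hf t).deriv ▸ hpos t ht
  have hz1 : z < z + 1 := lt_add_one z
  have hfz1 : 0 < f (z + 1) := hz ▸ hmono self_mem_Ici hz1.le hz1
  refine hfz1.not_ge (ge_of_tendsto hlim ?_)
  filter_upwards [eventually_ge_atTop (z + 1)] with t ht
  exact hmono.monotoneOn hz1.le (hz1.le.trans ht) ht

lemma exists_finset_deriv_eq_zero_of_tendsto (hf : ∀ t, HasDerivAt f (f' t) t)
    (hlim : Tendsto f atTop (𝓝 0)) (Z : Finset ℝ) (hZ : ∀ z ∈ Z, f z = 0) :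
    ∃ Z' : Finset ℝ, Z.card ≤ Z'.card ∧ ∀ w ∈ Z', f' w = 0 ∧ ∃ z ∈ Z, z < w := by
  obtain ⟨Z', hcard, hZ'⟩ := exists_finset_deriv_eq_zero hf Z hZ
  rcases Z.eq_empty_or_nonempty with rfl | hne
  · exact ⟨∅, by simp, by simp⟩
  have hmax := Z.max'_mem hne
  obtain ⟨w, hw, hw0⟩ := exists_deriv_eq_zero_of_tendsto hf hlim (hZ _ hmax)
  have hwZ' : w ∉ Z' := fun hmem => by
    obtain ⟨_, _, _, b, hb, hwb⟩ := hZ' w hmem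
    exact (hwb.2.trans_le (Z.le_max' b hb)).not_gt hw
  refine ⟨insert w Z', by rwa [Finset.card_insert_of_notMem hwZ'],
    Finset.forall_mem_insert .. |>.mpr ⟨⟨hw0, _, hmax, hw⟩, fun x hx => ?_⟩⟩
  obtain ⟨hx0, a, ha, _, _, hxab⟩ := hZ' x hx
  exact ⟨hx0, a, ha, hxab.1⟩

lemma mul_pos_of_forall_mem_Icc_ne_zero (hf : Continuous f) {a b : ℝ} (hab : a ≤ b)
    (hne : ∀ t ∈ Icc a b, f t ≠ 0) : 0 < f a * f b := by
  by_contra! hle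
  have h0 : (0 : ℝ) ∈ uIcc (f a) (f b) := by
    rcases mul_nonpos_iff.mp hle with h | h
    · exact mem_uIcc_of_ge h.2 h.1
    · exact mem_uIcc_of_le h.1 h.2
  obtain ⟨t, ht, ht0⟩ := intermediate_value_uIcc hf.continuousOn h0
  exact hne t (uIcc_of_le hab ▸ ht) ht0

end RealFunctions

section SolutionSpace

/-- The real vector space of smooth functions `ℝ → ℝ`. -/
def smoothFun : Submodule ℝ (ℝ → ℝ) where
  carrier := {f | ContDiff ℝ ∞ f}
  add_mem' hf hg := mem_ofPred.mpr (hf.out.add hg.out)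
  zero_mem' := mem_ofPred.mpr contDiff_const
  smul_mem' _ _ hf := mem_ofPred.mpr (contDiff_const.smul hf.out)

instance : CoeFun smoothFun fun _ => ℝ → ℝ := ⟨Subtype.val⟩

lemma contDiff_smoothFun (f : smoothFun) : ContDiff ℝ ∞ f := f.2

lemma differentiable_smoothFun (f : smoothFun) : Differentiable ℝ f :=
  (contDiff_smoothFun f).differentiable (by simp)

lemma continuous_smoothFun (f : smoothFun) : Continuous f :=
  (contDiff_smoothFun f).continuous

/-- Differentiation as an endomorphism of the space of smooth functions. -/
noncomputable def smoothDeriv : Module.End ℝ smoothFun where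
  toFun f := ⟨deriv f, (contDiff_infty_iff_deriv.mp f.2).2⟩
  map_add' f g := by
    ext t
    exact deriv_add (differentiable_smoothFun f t) (differentiable_smoothFun g t)
  map_smul' c f := by
    ext t
    exact deriv_const_smul_field c f

lemma hasDerivAt_smoothDeriv (f : smoothFun) (t : ℝ) : HasDerivAt f (smoothDeriv f t) t :=
  (differentiable_smoothFun f t).hasDerivAt

lemma smoothDeriv_pow_apply (k : ℕ) (f : smoothFun) : (smoothDeriv ^ k) f = iteratedDeriv k f := by
  induction k with
  | zero => rw [pow_zero, Module.End.one_apply, iteratedDeriv_zero]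
  | succ k ih => rw [pow_succ', Module.End.mul_apply, iteratedDeriv_succ, ← ih]; rfl

/-- The constant-coefficient differential operator `P(d/dt)`. -/
noncomputable def diffOp (P : ℝ[X]) : Module.End ℝ smoothFun := aeval smoothDeriv P

lemma diffOp_mul_apply (P Q : ℝ[X]) (f : smoothFun) : diffOp (P * Q) f = diffOp P (diffOp Q f) := by
  simp only [diffOp, map_mul, Module.End.mul_apply]

lemma diffOp_comm (P Q : ℝ[X]) (f : smoothFun) : diffOp P (diffOp Q f) = diffOp Q (diffOp P f) := by
  rw [← diffOp_mul_apply, mul_comm, diffOp_mul_apply]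

lemma diffOp_X_pow (k : ℕ) : diffOp (X ^ k) = smoothDeriv ^ k := by
  rw [diffOp, map_pow, aeval_X]

lemma diffOp_X_add_C_apply (g : ℝ) (f : smoothFun) :
    diffOp (X + C g) f = smoothDeriv f + g • f := by
  simp [diffOp]

/-- The polynomial `∏ g ∈ s, (X + g)`, with the decay exponents `g` as *negated* roots. -/
noncomputable def charPoly (s : Multiset ℝ) : ℝ[X] := (s.map fun g => X + C g).prod

lemma charPoly_cons (g : ℝ) (s : Multiset ℝ) : charPoly (g ::ₘ s) = (X + C g) * charPoly s := by
  rw [charPoly, Multiset.map_cons, Multiset.prod_cons, charPoly]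

lemma charPoly_replicate (n : ℕ) (g : ℝ) : charPoly (Multiset.replicate n g) = (X + C g) ^ n := by
  rw [charPoly, Multiset.map_replicate, Multiset.prod_replicate]

lemma charPoly_ne_zero (s : Multiset ℝ) : charPoly s ≠ 0 := by
  simp [charPoly, Multiset.prod_eq_zero_iff, X_add_C_ne_zero]

/-- The exponential polynomials with exponent multiset `s`, as the solution space of the linear
differential equation with characteristic polynomial `charPoly s`. -/
noncomputable def solSpace (s : Multiset ℝ) : Submodule ℝ smoothFun :=
  LinearMap.ker (diffOp (charPoly s))

variable {s : Multiset ℝ} {f : smoothFun}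

lemma mem_solSpace : f ∈ solSpace s ↔ diffOp (charPoly s) f = 0 := Iff.rfl

lemma mem_solSpace_zero : f ∈ solSpace 0 ↔ f = 0 := by
  simp [mem_solSpace, charPoly, diffOp]

lemma mem_solSpace_cons {g : ℝ} : f ∈ solSpace (g ::ₘ s) ↔ diffOp (X + C g) f ∈ solSpace s := by
  rw [mem_solSpace, mem_solSpace, charPoly_cons, mul_comm, diffOp_mul_apply]

lemma mem_solSpace_cons' {g : ℝ} :
    f ∈ solSpace (g ::ₘ s) ↔ diffOp (X + C g) (diffOp (charPoly s) f) = 0 := by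
  rw [mem_solSpace, charPoly_cons, diffOp_mul_apply]

lemma mem_solSpace_of_dvd {P : ℝ[X]} (hP : P ∣ charPoly s) (hf : diffOp P f = 0) :
    f ∈ solSpace s := by
  obtain ⟨Q, hQ⟩ := hP
  rw [mem_solSpace, hQ, mul_comm, diffOp_mul_apply, hf, map_zero]

lemma solSpace_le_cons (g : ℝ) (s : Multiset ℝ) : solSpace s ≤ solSpace (g ::ₘ s) := fun _ hf =>
  mem_solSpace_of_dvd (charPoly_cons g s ▸ dvd_mul_left _ _) hf

lemma diffOp_mem_solSpace (P : ℝ[X]) (hf : f ∈ solSpace s) : diffOp P f ∈ solSpace s := by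
  rw [mem_solSpace] at hf ⊢
  rw [diffOp_comm, hf, map_zero]

lemma smoothDeriv_pow_mem_solSpace (k : ℕ) (hf : f ∈ solSpace s) :
    (smoothDeriv ^ k) f ∈ solSpace s :=
  diffOp_X_pow k ▸ diffOp_mem_solSpace _ hf

lemma hasDerivAt_exp_mul (g : ℝ) (f : smoothFun) (t : ℝ) :
    HasDerivAt (fun u => Real.exp (g * u) * f u) (Real.exp (g * t) * diffOp (X + C g) f t) t := by
  have hexp : HasDerivAt (fun u => Real.exp (g * u)) (Real.exp (g * t) * g) t := by
    simpa using ((hasDerivAt_id t).const_mul g).exp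
  refine (hexp.mul (hasDerivAt_smoothDeriv f t)).congr_deriv ?_
  rw [diffOp_X_add_C_apply]
  change _ = _ * (smoothDeriv f t + g * f t)
  ring

lemma eq_exp_mul_of_diffOp_X_add_C_eq_zero {g : ℝ} (hf : diffOp (X + C g) f = 0) (t u : ℝ) :
    Real.exp (g * t) * f t = Real.exp (g * u) * f u := by
  refine is_const_of_deriv_eq_zero (fun t => (hasDerivAt_exp_mul g f t).differentiableAt)
    (fun t => ?_) t u
  rw [(hasDerivAt_exp_mul g f t).deriv, hf]
  exact mul_zero _

lemma eq_zero_of_diffOp_X_add_C_eq_zero {g : ℝ} (hf : diffOp (X + C g) f = 0) {z : ℝ}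
    (hz : f z = 0) : f = 0 := by
  ext t
  have hexp := eq_exp_mul_of_diffOp_X_add_C_eq_zero hf t z
  rw [hz, mul_zero] at hexp
  exact (mul_eq_zero.mp hexp).resolve_left (Real.exp_pos _).ne'

lemma exists_finset_diffOp_X_add_C_eq_zero (g : ℝ) (Z : Finset ℝ) (hZ : ∀ z ∈ Z, f z = 0) :
    ∃ Z' : Finset ℝ, Z.card ≤ Z'.card + 1 ∧
      ∀ w ∈ Z', diffOp (X + C g) f w = 0 ∧ ∃ a ∈ Z, ∃ b ∈ Z, w ∈ Ioo a b := by
  obtain ⟨Z', hcard, hZ'⟩ := exists_finset_deriv_eq_zero (hasDerivAt_exp_mul g f) Z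
    fun z hz => by rw [hZ z hz, mul_zero]
  exact ⟨Z', hcard, fun w hw =>
    (hZ' w hw).imp_left fun h => (mul_eq_zero.mp h).resolve_left (Real.exp_pos _).ne'⟩

theorem eq_zero_of_card_le_card_zeros (hf : f ∈ solSpace s) {Z : Finset ℝ}
    (hcard : s.card ≤ Z.card) (hZ : ∀ z ∈ Z, f z = 0) : f = 0 := by
  induction s using Multiset.induction_on generalizing f Z with
  | empty => exact mem_solSpace_zero.mp hf
  | cons g s ih =>
    rw [Multiset.card_cons] at hcard
    obtain ⟨Z', hcard', hZ'⟩ := exists_finset_diffOp_X_add_C_eq_zero g Z hZ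
    have hker : diffOp (X + C g) f = 0 :=
      ih (mem_solSpace_cons.mp hf) (by lia) fun w hw => (hZ' w hw).1
    obtain ⟨z, hz⟩ : Z.Nonempty := Finset.card_pos.mp (by lia)
    exact eq_zero_of_diffOp_X_add_C_eq_zero hker (hZ z hz)

end SolutionSpace

section ExpPolynomial

/-- The map `q ↦ exp (-g t) * q(t)` from polynomials to smooth functions. -/
noncomputable def expMul (g : ℝ) : ℝ[X] →ₗ[ℝ] smoothFun where
  toFun q := ⟨fun t => Real.exp (-g * t) * q.eval t,
    (contDiff_const.mul contDiff_id).exp.mul (q.contDiff_aeval ∞)⟩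
  map_add' p q := by
    ext t
    exact (congrArg _ eval_add).trans (mul_add ..)
  map_smul' c q := by
    ext t
    exact (congrArg _ (eval_smul ..)).trans (mul_left_comm ..)

lemma expMul_apply (g : ℝ) (q : ℝ[X]) (t : ℝ) :
    expMul g q t = Real.exp (-g * t) * q.eval t := rfl

lemma expMul_injective (g : ℝ) : Function.Injective (expMul g) := by
  refine (injective_iff_map_eq_zero _).mpr fun q hq => Polynomial.funext fun t => ?_
  have ht : Real.exp (-g * t) * q.eval t = 0 := congrFun (congrArg Subtype.val hq) t
  simpa using ht

lemma diffOp_X_add_C_expMul (g : ℝ) (q : ℝ[X]) :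
    diffOp (X + C g) (expMul g q) = expMul g (derivative q) := by
  ext t
  have hder : HasDerivAt (fun u => Real.exp (g * u) * expMul g q u) (q.derivative.eval t) t := by
    refine (q.hasDerivAt t).congr_of_eventuallyEq (.of_forall fun u => ?_)
    dsimp only
    rw [expMul_apply, ← mul_assoc, ← Real.exp_add]
    simp
  have heq := (hasDerivAt_exp_mul g (expMul g q) t).unique hder
  rw [expMul_apply, ← heq, ← mul_assoc, ← Real.exp_add]
  simp

lemma diffOp_X_add_C_pow_expMul (g : ℝ) (n : ℕ) (q : ℝ[X]) :
    diffOp ((X + C g) ^ n) (expMul g q) = expMul g (derivative^[n] q) := by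
  induction n generalizing q with
  | zero => simp [diffOp]
  | succ n ih =>
    rw [pow_succ, diffOp_mul_apply, diffOp_X_add_C_expMul, ih, Function.iterate_succ_apply]

lemma diffOp_expMul_one (P : ℝ[X]) (g : ℝ) :
    diffOp P (expMul g 1) = P.eval (-g) • expMul g 1 := by
  refine Module.End.aeval_apply_of_hasEigenvector (Module.End.hasEigenvector_iff.mpr
    ⟨Module.End.mem_eigenspace_iff.mpr ?_, (expMul_injective g).ne_iff' (map_zero _) |>.mpr
      one_ne_zero⟩)
  have hker := diffOp_X_add_C_expMul g 1
  rw [diffOp_X_add_C_apply, derivative_one, map_zero] at hker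
  rw [neg_smul]
  exact eq_neg_of_add_eq_zero_left hker

lemma exists_diffOp_expMul_eq_expMul_one (g : ℝ) {P : ℝ[X]} (hP : P ≠ 0) :
    ∃ q : ℝ[X], diffOp P (expMul g q) = expMul g 1 := by
  obtain ⟨Q, hPQ, hQ⟩ := exists_eq_pow_rootMultiplicity_mul_and_not_dvd P hP (-g)
  set m := rootMultiplicity (-g) P
  rw [dvd_iff_isRoot, IsRoot.def] at hQ
  have hder : derivative^[m] (X ^ m : ℝ[X]) = (m.factorial : ℝ) • 1 := by
    rw [iterate_derivative_X_pow_eq_smul, Nat.descFactorial_self, Nat.sub_self, pow_zero]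
  refine ⟨(m.factorial * Q.eval (-g))⁻¹ • X ^ m, ?_⟩
  rw [hPQ, C_neg, sub_neg_eq_add, mul_comm, diffOp_mul_apply, diffOp_X_add_C_pow_expMul,
    iterate_derivative_smul, hder, map_smul, map_smul, map_smul, map_smul, diffOp_expMul_one,
    smul_smul, smul_smul, mul_assoc,
    inv_mul_cancel₀ (mul_ne_zero (Nat.cast_ne_zero.mpr m.factorial_ne_zero) hQ), one_smul]

lemma eq_smul_expMul_one_of_diffOp_X_add_C_eq_zero {g : ℝ} {f : smoothFun}
    (hf : diffOp (X + C g) f = 0) : f = f 0 • expMul g 1 := by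
  ext t
  change f t = f 0 * (Real.exp (-g * t) * eval t 1)
  have hexp := eq_exp_mul_of_diffOp_X_add_C_eq_zero hf t 0
  rw [mul_zero, Real.exp_zero, one_mul] at hexp
  rw [← hexp, eval_one, mul_one, mul_right_comm, ← Real.exp_add, neg_mul, add_neg_cancel,
    Real.exp_zero, one_mul]

lemma solSpace_le_span_expMul (s : Multiset ℝ) :
    solSpace s ≤ Submodule.span ℝ {f | ∃ g ∈ s, ∃ q, expMul g q = f} := by
  induction s using Multiset.induction_on with
  | empty => exact fun f hf => mem_solSpace_zero.mp hf ▸ zero_mem _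
  | cons g s ih =>
    intro f hf
    obtain ⟨q, hq⟩ := exists_diffOp_expMul_eq_expMul_one g (charPoly_ne_zero s)
    set c := diffOp (charPoly s) f 0
    have hrest : f - c • expMul g q ∈ solSpace s := by
      rw [mem_solSpace, map_sub, map_smul, hq, sub_eq_zero]
      exact eq_smul_expMul_one_of_diffOp_X_add_C_eq_zero (mem_solSpace_cons'.mp hf)
    rw [← sub_add_cancel f (c • expMul g q)]
    refine add_mem (Submodule.span_mono ?_ (ih hrest)) (Submodule.smul_mem _ _
      (Submodule.subset_span ⟨g, s.mem_cons_self g, q, rfl⟩))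
    rintro _ ⟨g', hg', q', rfl⟩
    exact ⟨g', Multiset.mem_cons_of_mem hg', q', rfl⟩

lemma tendsto_expMul_atTop {g : ℝ} (hg : 0 < g) (q : ℝ[X]) :
    Tendsto (expMul g q) atTop (𝓝 0) := by
  have hscale : Tendsto (fun t : ℝ => g * t) atTop atTop := tendsto_id.const_mul_atTop hg
  refine ((q.comp (C g⁻¹ * X)).tendsto_div_exp_atTop.comp hscale).congr fun t => ?_
  simp only [Function.comp_apply, eval_comp, eval_mul, eval_C, eval_X,
    inv_mul_cancel_left₀ hg.ne', expMul_apply, neg_mul, Real.exp_neg, div_eq_inv_mul]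

theorem tendsto_atTop_of_mem_solSpace {s : Multiset ℝ} (hs : ∀ g ∈ s, 0 < g) {f : smoothFun}
    (hf : f ∈ solSpace s) : Tendsto f atTop (𝓝 0) := by
  have hspan := solSpace_le_span_expMul s hf
  clear hf
  induction hspan using Submodule.span_induction with
  | mem f hf =>
    obtain ⟨g, hg, q, rfl⟩ := hf
    exact tendsto_expMul_atTop (hs g hg) q
  | zero => exact tendsto_const_nhds
  | add f₁ f₂ _ _ h₁ h₂ => exact add_zero (0 : ℝ) ▸ h₁.add h₂
  | smul c f _ h => exact mul_zero c ▸ h.const_mul c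

lemma degree_lt_of_iterate_derivative_eq_zero {q : ℝ[X]} {n : ℕ} (hq : derivative^[n] q = 0) :
    q.degree < n := by
  refine (degree_lt_iff_coeff_zero q n).mpr fun m hm => ?_
  have hcoeff := congrArg (coeff · (m - n)) hq
  simpa [coeff_iterate_derivative, Nat.sub_add_cancel hm, Nat.descFactorial_eq_zero_iff_lt,
    hm.not_gt] using hcoeff

lemma expMul_mem_solSpace {s : Multiset ℝ} {g : ℝ} {n : ℕ} (hn : (X + C g) ^ n ∣ charPoly s)
    {q : ℝ[X]} (hq : q.natDegree < n) : expMul g q ∈ solSpace s :=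
  mem_solSpace_of_dvd hn (by
    rw [diffOp_X_add_C_pow_expMul, iterate_derivative_eq_zero hq, map_zero])

lemma exists_expMul_eq_of_mem_solSpace_replicate {n : ℕ} {g : ℝ} {f : smoothFun}
    (hf : f ∈ solSpace (Multiset.replicate n g)) : ∃ q : ℝ[X], q.degree < n ∧ expMul g q = f := by
  have hspan : Submodule.span ℝ {f | ∃ g' ∈ Multiset.replicate n g, ∃ q, expMul g' q = f} ≤
      LinearMap.range (expMul g) := Submodule.span_le.mpr (by
    rintro _ ⟨g', hg', q, rfl⟩
    exact Multiset.eq_of_mem_replicate hg' ▸ LinearMap.mem_range_self _ q)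
  obtain ⟨q, rfl⟩ := hspan (solSpace_le_span_expMul _ hf)
  rw [mem_solSpace, charPoly_replicate, diffOp_X_add_C_pow_expMul] at hf
  exact ⟨q, degree_lt_of_iterate_derivative_eq_zero
    (expMul_injective g (hf.trans (map_zero _).symm)), rfl⟩

end ExpPolynomial

section Interpolation

/-- The evaluation functional `f ↦ f t` on smooth functions. -/
def evalAt (t : ℝ) : Module.Dual ℝ smoothFun := LinearMap.proj t ∘ₗ smoothFun.subtype

lemma evalAt_apply (t : ℝ) (f : smoothFun) : evalAt t f = f t := rfl

/-- The restriction of the elements of `solSpace s` to a finite set of nodes. -/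
noncomputable def evalOn (s : Multiset ℝ) (Y : Finset ℝ) : solSpace s →ₗ[ℝ] (Y → ℝ) :=
  LinearMap.pi fun y => evalAt y ∘ₗ (solSpace s).subtype

variable {s : Multiset ℝ} {Y : Finset ℝ}

lemma evalOn_injective (hY : s.card ≤ Y.card) : Function.Injective (evalOn s Y) :=
  (injective_iff_map_eq_zero _).mpr fun f hf => Subtype.ext
    (eq_zero_of_card_le_card_zeros f.2 hY fun y hy => congrFun hf ⟨y, hy⟩)

instance (s : Multiset ℝ) : FiniteDimensional ℝ (solSpace s) := by
  obtain ⟨Y, hY⟩ := Infinite.exists_subset_card_eq ℝ s.card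
  exact Module.Finite.of_injective _ (evalOn_injective hY.ge)

lemma solSpace_lt_cons (g : ℝ) (s : Multiset ℝ) : solSpace s < solSpace (g ::ₘ s) := by
  obtain ⟨q, hq⟩ := exists_diffOp_expMul_eq_expMul_one g (charPoly_ne_zero s)
  refine (solSpace_le_cons g s).lt_of_not_ge fun hle => ?_
  have hmem : expMul g q ∈ solSpace (g ::ₘ s) := by
    rw [mem_solSpace_cons', hq, diffOp_X_add_C_expMul, derivative_one, map_zero]
  have hzero : expMul g 1 = 0 := hq ▸ mem_solSpace.mp (hle hmem)
  exact one_ne_zero (expMul_injective g (hzero.trans (map_zero _).symm))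

theorem finrank_solSpace (s : Multiset ℝ) : Module.finrank ℝ (solSpace s) = s.card := by
  refine le_antisymm ?_ ?_
  · obtain ⟨Y, hY⟩ := Infinite.exists_subset_card_eq ℝ s.card
    calc Module.finrank ℝ (solSpace s) ≤ Module.finrank ℝ (Y → ℝ) :=
          LinearMap.finrank_le_finrank_of_injective (evalOn_injective hY.ge)
      _ = s.card := by rw [Module.finrank_fintype_fun_eq_card, Fintype.card_coe, hY]
  · induction s using Multiset.induction_on with
    | empty => exact zero_le
    | cons g s ih =>
      rw [Multiset.card_cons]
      exact ih.trans_lt (Submodule.finrank_lt_finrank_of_lt (solSpace_lt_cons g s))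

lemma exists_mem_solSpace_eqOn (hY : Y.card = s.card) (v : ℝ → ℝ) :
    ∃ f ∈ solSpace s, EqOn f v Y := by
  have hfinrank : Module.finrank ℝ (solSpace s) = Module.finrank ℝ (Y → ℝ) := by
    rw [finrank_solSpace, Module.finrank_fintype_fun_eq_card, Fintype.card_coe, hY]
  obtain ⟨f, hf⟩ := (LinearMap.linearEquivOfInjective (V := solSpace s) (V₂ := Y → ℝ) (evalOn s Y)
    (evalOn_injective hY.ge) hfinrank).surjective fun y => v y
  exact ⟨f, f.2, fun y hy => congrFun hf ⟨y, hy⟩⟩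

/-- `l` is the Lagrange fundamental function of `solSpace s` at `x` for the nodes `Y`: it takes the
value `1` at `x` and vanishes at the other nodes. -/
def IsLagrangeFun (s : Multiset ℝ) (Y : Finset ℝ) (x : ℝ) (l : smoothFun) : Prop :=
  l ∈ solSpace s ∧ ∀ y ∈ Y, l y = if y = x then 1 else 0

lemma exists_isLagrangeFun (hY : Y.card = s.card) (x : ℝ) : ∃ l, IsLagrangeFun s Y x l :=
  exists_mem_solSpace_eqOn hY fun y => if y = x then 1 else 0

lemma IsLagrangeFun.eq (hY : s.card ≤ Y.card) {x : ℝ} {l l' : smoothFun}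
    (hl : IsLagrangeFun s Y x l) (hl' : IsLagrangeFun s Y x l') : l = l' :=
  sub_eq_zero.mp (eq_zero_of_card_le_card_zeros (sub_mem hl.1 hl'.1) hY fun y hy =>
    sub_eq_zero.mpr ((hl.2 y hy).trans (hl'.2 y hy).symm))

theorem eq_sum_smul_of_isLagrangeFun (hY : s.card ≤ Y.card) {l : ℝ → smoothFun}
    (hl : ∀ x ∈ Y, IsLagrangeFun s Y x (l x)) {f : smoothFun} (hf : f ∈ solSpace s) :
    f = ∑ x ∈ Y, f x • l x := by
  refine sub_eq_zero.mp (eq_zero_of_card_le_card_zeros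
    (sub_mem hf (sum_mem fun x hx => Submodule.smul_mem _ _ (hl x hx).1)) hY fun y hy => ?_)
  have hsum : ∑ x ∈ Y, f x * l x y = f y := by
    rw [Finset.sum_congr rfl fun x hx => by rw [(hl x hx).2 y hy]]
    simp [hy]
  rw [← evalAt_apply, map_sub, map_sum, sub_eq_zero]
  exact hsum.symm

end Interpolation

section Translation

/-- The shift `f ↦ f (· + a)` of smooth functions. -/
def translate (a : ℝ) : Module.End ℝ smoothFun where
  toFun f := ⟨fun t => f (t + a), (contDiff_smoothFun f).comp (contDiff_id.add contDiff_const)⟩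
  map_add' _ _ := rfl
  map_smul' _ _ := rfl

lemma translate_apply (a : ℝ) (f : smoothFun) (t : ℝ) : translate a f t = f (t + a) := rfl

lemma commute_translate_smoothDeriv (a : ℝ) : Commute (translate a) smoothDeriv := by
  ext f t
  exact (deriv_comp_add_const f a t).symm

lemma diffOp_translate (P : ℝ[X]) (a : ℝ) (f : smoothFun) :
    diffOp P (translate a f) = translate a (diffOp P f) :=
  LinearMap.congr_fun (Algebra.commute_of_mem_adjoin_singleton_of_commute
    (aeval_mem_adjoin_singleton ℝ smoothDeriv) (commute_translate_smoothDeriv a)).symm f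

lemma smoothDeriv_pow_translate (k : ℕ) (a : ℝ) (f : smoothFun) :
    (smoothDeriv ^ k) (translate a f) = translate a ((smoothDeriv ^ k) f) :=
  diffOp_X_pow k ▸ diffOp_translate _ a f

lemma translate_mem_solSpace (a : ℝ) {s : Multiset ℝ} {f : smoothFun} (hf : f ∈ solSpace s) :
    translate a f ∈ solSpace s := by
  rw [mem_solSpace, diffOp_translate, mem_solSpace.mp hf, map_zero]

end Translation

section Comparison

variable {s : Multiset ℝ} {f : smoothFun}

lemma exists_finset_smoothDeriv_eq_zero (hs : ∀ g ∈ s, 0 < g) (hf : f ∈ solSpace s)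
    (Z : Finset ℝ) (hZ : ∀ z ∈ Z, 0 ≤ z ∧ f z = 0) :
    ∃ Z' : Finset ℝ, Z.card ≤ Z'.card ∧ ∀ w ∈ Z', 0 < w ∧ smoothDeriv f w = 0 := by
  obtain ⟨Z', hcard, hZ'⟩ := exists_finset_deriv_eq_zero_of_tendsto (hasDerivAt_smoothDeriv f)
    (tendsto_atTop_of_mem_solSpace hs hf) Z fun z hz => (hZ z hz).2
  refine ⟨Z', hcard, fun w hw => ?_⟩
  obtain ⟨hw0, z, hz, hzw⟩ := hZ' w hw
  exact ⟨(hZ z hz).1.trans_lt hzw, hw0⟩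

lemma exists_finset_smoothDeriv_pow_eq_zero (hs : ∀ g ∈ s, 0 < g) {k : ℕ} (hk : 1 ≤ k)
    (hf : f ∈ solSpace s) (Z : Finset ℝ) (hZ : ∀ z ∈ Z, 0 ≤ z ∧ f z = 0) :
    ∃ Z' : Finset ℝ, Z.card ≤ Z'.card ∧ ∀ w ∈ Z', 0 < w ∧ (smoothDeriv ^ k) f w = 0 := by
  induction k, hk using Nat.le_induction with
  | base => simpa only [pow_one] using exists_finset_smoothDeriv_eq_zero hs hf Z hZ
  | succ k _ ih =>
    obtain ⟨Z₁, hcard₁, hZ₁⟩ := ih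
    obtain ⟨Z₂, hcard₂, hZ₂⟩ := exists_finset_smoothDeriv_eq_zero hs
      (smoothDeriv_pow_mem_solSpace k hf) Z₁ fun z hz => (hZ₁ z hz).imp_left le_of_lt
    exact ⟨Z₂, hcard₁.trans hcard₂, pow_succ' smoothDeriv k ▸ hZ₂⟩

lemma exists_eq_neg_mul_diffOp_X_add_C (g : ℝ) {z : ℝ} (hz : 0 < z) (hfz : f z = 0) :
    ∃ ξ ∈ Ioo 0 z, ∃ c > 0, f 0 = -(c * diffOp (X + C g) f ξ) := by
  obtain ⟨ξ, hξ, hslope⟩ := exists_hasDerivAt_eq_slope _ _ hz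
    (fun t _ => (hasDerivAt_exp_mul g f t).continuousAt.continuousWithinAt)
    (fun t _ => hasDerivAt_exp_mul g f t)
  refine ⟨ξ, hξ, z * Real.exp (g * ξ), by positivity, ?_⟩
  rw [mul_assoc, hslope, hfz, mul_zero, mul_zero, Real.exp_zero, sub_zero,
    mul_div_cancel₀ _ hz.ne']
  ring

-- The zeros of `diffOp (X + C g) f` supplied by Rolle's theorem already exhaust the admissible
-- number, so there is none between `0` and the first zero of `f`.
lemma mul_diffOp_X_add_C_neg {g b : ℝ} (hf : f ∈ solSpace (b ::ₘ g ::ₘ s)) (hf0 : f ≠ 0)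
    {Z : Finset ℝ} (hcard : s.card + 1 ≤ Z.card) (hZ : ∀ z ∈ Z, 0 < z ∧ f z = 0) :
    f 0 * diffOp (X + C g) f 0 < 0 := by
  set l := diffOp (X + C g) f
  have hl : l ∈ solSpace (b ::ₘ s) := mem_solSpace_cons.mp (Multiset.cons_swap b g s ▸ hf)
  have hne : Z.Nonempty := Finset.card_pos.mp (by lia)
  obtain ⟨hmin_pos, hmin⟩ := hZ _ (Z.min'_mem hne)
  obtain ⟨Z', hcard', hZ'⟩ := exists_finset_diffOp_X_add_C_eq_zero g Z fun z hz => (hZ z hz).2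
  have hl_ne : ∀ t ≤ Z.min' hne, l t ≠ 0 := fun t ht hlt => by
    have htZ' : t ∉ Z' := fun hmem => by
      obtain ⟨-, a, ha, _, _, hab⟩ := hZ' t hmem
      exact (hab.1.trans_le ht).not_ge (Z.min'_le a ha)
    have hl0 : l = 0 := eq_zero_of_card_le_card_zeros hl (Z := insert t Z')
      (by rw [Multiset.card_cons, Finset.card_insert_of_notMem htZ']; lia)
      (Finset.forall_mem_insert .. |>.mpr ⟨hlt, fun w hw => (hZ' w hw).1⟩)
    exact hf0 (eq_zero_of_diffOp_X_add_C_eq_zero hl0 hmin)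
  obtain ⟨ξ, hξ, c, hc, hf0ξ⟩ := exists_eq_neg_mul_diffOp_X_add_C g hmin_pos hmin
  have hpos : 0 < l 0 * l ξ := mul_pos_of_forall_mem_Icc_ne_zero (continuous_smoothFun l) hξ.1.le
    fun t ht => hl_ne t (ht.2.trans hξ.2.le)
  calc f 0 * l 0 = -(c * (l 0 * l ξ)) := by rw [hf0ξ]; ring
    _ < 0 := neg_neg_of_pos (mul_pos hc hpos)

theorem neg_one_pow_mul_diffOp_charPoly_nonneg {b : ℝ} (hf : f ∈ solSpace (b ::ₘ s))
    {Z : Finset ℝ} (hcard : s.card ≤ Z.card) (hZ : ∀ z ∈ Z, 0 < z ∧ f z = 0) :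
    0 ≤ (-1) ^ s.card * (f 0 * diffOp (charPoly s) f 0) := by
  induction s using Multiset.induction_on generalizing f Z with
  | empty => simpa [charPoly, diffOp] using mul_self_nonneg (f 0)
  | cons g s ih =>
    rw [Multiset.card_cons] at hcard
    rcases eq_or_ne f 0 with rfl | hf0
    · rw [map_zero]
      exact (mul_eq_zero_of_right _ (mul_zero _)).ge
    obtain ⟨Z', hcard', hZ'⟩ := exists_finset_diffOp_X_add_C_eq_zero g Z fun z hz => (hZ z hz).2
    have hneg := mul_diffOp_X_add_C_neg hf hf0 hcard hZ
    have hih := ih (f := diffOp (X + C g) f) (Z := Z')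
      (mem_solSpace_cons.mp (Multiset.cons_swap b g s ▸ hf)) (by lia) fun w hw => by
        obtain ⟨hw0, a, ha, _, _, hab⟩ := hZ' w hw
        exact ⟨(hZ a ha).1.trans hab.1, hw0⟩
    rw [← diffOp_mul_apply, mul_comm _ (X + C g), ← charPoly_cons] at hih
    set l₀ := diffOp (X + C g) f 0
    set r := diffOp (charPoly (g ::ₘ s)) f 0
    have hl₀ : 0 < l₀ ^ 2 := sq_pos_of_ne_zero (right_ne_zero_of_mul hneg.ne)
    refine nonneg_of_mul_nonneg_left ?_ hl₀
    calc 0 ≤ -(f 0 * l₀) * ((-1) ^ s.card * (l₀ * r)) :=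
          mul_nonneg (neg_nonneg.mpr hneg.le) hih
      _ = (-1) ^ (g ::ₘ s).card * (f 0 * r) * l₀ ^ 2 := by
          rw [Multiset.card_cons, pow_succ]; ring

lemma diffOp_charPoly_sub {a b : ℝ} {u v : smoothFun} (hu : u ∈ solSpace (a ::ₘ s))
    (hv : v ∈ solSpace (b ::ₘ s)) :
    diffOp (charPoly (b ::ₘ s)) (v - u) = (a - b) • diffOp (charPoly s) u := by
  have hr := mem_solSpace_cons'.mp hu
  rw [diffOp_X_add_C_apply, add_eq_zero_iff_eq_neg] at hr
  rw [map_sub, mem_solSpace.mp hv, charPoly_cons, diffOp_mul_apply, diffOp_X_add_C_apply, hr]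
  module

-- `u` and `v - u` both have the maximal number of zeros for their spaces, so their signs at `0` can
-- be read off from the same function `diffOp (charPoly s) u`.
theorem abs_le_abs_of_solSpace_cons {a b : ℝ} (hab : a ≤ b) {u v : smoothFun}
    (hu : u ∈ solSpace (a ::ₘ s)) (hv : v ∈ solSpace (b ::ₘ s)) {Z Z' : Finset ℝ}
    (hcard : s.card ≤ Z.card) (hZ : ∀ z ∈ Z, 0 < z ∧ u z = 0)
    (hcard' : s.card + 1 ≤ Z'.card) (hZ' : ∀ z ∈ Z', 0 < z ∧ (v - u) z = 0) :
    |u 0| ≤ |v 0| := by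
  rcases hab.eq_or_lt with rfl | hab
  · have hvu : v - u = 0 := eq_zero_of_card_le_card_zeros (sub_mem hv hu)
      (by rwa [Multiset.card_cons]) fun z hz => (hZ' z hz).2
    rw [sub_eq_zero.mp hvu]
  set r := diffOp (charPoly s) u
  rcases eq_or_ne (r 0) 0 with hr0 | hr0
  · have hus : u ∈ solSpace s :=
      mem_solSpace.mpr (eq_zero_of_diffOp_X_add_C_eq_zero (mem_solSpace_cons'.mp hu) hr0)
    rw [eq_zero_of_card_le_card_zeros hus hcard fun z hz => (hZ z hz).2]
    exact (abs_zero (α := ℝ)).trans_le (abs_nonneg _)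
  have hvu : v - u ∈ solSpace (a ::ₘ b ::ₘ s) :=
    sub_mem (solSpace_le_cons a _ hv) (Multiset.cons_swap b a s ▸ solSpace_le_cons b _ hu)
  have hsign_u := neg_one_pow_mul_diffOp_charPoly_nonneg hu hcard hZ
  have hsign_vu := neg_one_pow_mul_diffOp_charPoly_nonneg hvu
    (by rwa [Multiset.card_cons]) hZ'
  rw [diffOp_charPoly_sub hu hv, Multiset.card_cons] at hsign_vu
  change 0 ≤ (-1) ^ (s.card + 1) * ((v 0 - u 0) * ((a - b) * r 0)) at hsign_vu
  have hsame_sign : 0 ≤ u 0 * (v 0 - u 0) := by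
    refine nonneg_of_mul_nonneg_left ?_ (mul_pos (sub_pos.mpr hab) (sq_pos_of_ne_zero hr0))
    have hsq : ((-1 : ℝ) ^ s.card) ^ 2 = 1 := by
      rw [← pow_mul, mul_comm, pow_mul, neg_one_sq, one_pow]
    calc 0 ≤ _ := mul_nonneg hsign_u hsign_vu
      _ = ((-1 : ℝ) ^ s.card) ^ 2 * (u 0 * (v 0 - u 0) * ((b - a) * r 0 ^ 2)) := by ring
      _ = _ := by rw [hsq, one_mul]
  exact sq_le_sq.mp (by nlinarith [sq_nonneg (v 0 - u 0)])

lemma abs_smoothDeriv_pow_le_of_isLagrangeFun_cons {a b : ℝ} (hab : a ≤ b)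
    (hs : ∀ g ∈ a ::ₘ s, 0 < g) {k : ℕ} (hk : 1 ≤ k) {Y : Finset ℝ} (hY₀ : ∀ y ∈ Y, 0 ≤ y)
    (hY : Y.card = s.card + 1) {x : ℝ} {l l' : smoothFun}
    (hl : IsLagrangeFun (a ::ₘ s) Y x l) (hl' : IsLagrangeFun (b ::ₘ s) Y x l') :
    |(smoothDeriv ^ k) l 0| ≤ |(smoothDeriv ^ k) l' 0| := by
  have hs' : ∀ g ∈ a ::ₘ b ::ₘ s, 0 < g := by
    rw [Multiset.forall_mem_cons] at hs
    exact Multiset.forall_mem_cons.mpr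
      ⟨hs.1, Multiset.forall_mem_cons.mpr ⟨hs.1.trans_le hab, hs.2⟩⟩
  obtain ⟨Z, hcard, hZ⟩ := exists_finset_smoothDeriv_pow_eq_zero hs hk hl.1 (Y.erase x)
    fun y hy => ⟨hY₀ y (Finset.mem_of_mem_erase hy), by
      rw [hl.2 y (Finset.mem_of_mem_erase hy), if_neg (Finset.ne_of_mem_erase hy)]⟩
  have hmem : l' - l ∈ solSpace (a ::ₘ b ::ₘ s) :=
    sub_mem (solSpace_le_cons a _ hl'.1) (Multiset.cons_swap b a s ▸ solSpace_le_cons b _ hl.1)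
  obtain ⟨Z', hcard', hZ'⟩ := exists_finset_smoothDeriv_pow_eq_zero hs' hk hmem Y
    fun y hy => ⟨hY₀ y hy, sub_eq_zero.mpr ((hl'.2 y hy).trans (hl.2 y hy).symm)⟩
  rw [map_sub] at hZ'
  exact abs_le_abs_of_solSpace_cons hab (smoothDeriv_pow_mem_solSpace k hl.1)
    (smoothDeriv_pow_mem_solSpace k hl'.1) (by grind [Finset.pred_card_le_card_erase]) hZ
    (hY ▸ hcard') hZ'

lemma abs_smoothDeriv_pow_le_of_isLagrangeFun_add {s' : Multiset ℝ}
    (hrel : Multiset.Rel (· ≤ ·) s s') (r : Multiset ℝ) (hs : ∀ g ∈ s + r, 0 < g)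
    {k : ℕ} (hk : 1 ≤ k) {Y : Finset ℝ} (hY₀ : ∀ y ∈ Y, 0 ≤ y) (hY : Y.card = (s + r).card)
    {x : ℝ} {l l' : smoothFun} (hl : IsLagrangeFun (s + r) Y x l)
    (hl' : IsLagrangeFun (s' + r) Y x l') :
    |(smoothDeriv ^ k) l 0| ≤ |(smoothDeriv ^ k) l' 0| := by
  induction hrel generalizing r l with
  | zero => rw [hl.eq hY.ge hl']
  | @cons a b s s' hab _ ih =>
    rw [Multiset.cons_add] at hl hl' hs hY
    obtain ⟨m, hm⟩ := exists_isLagrangeFun (s := b ::ₘ (s + r)) (hY.trans (by simp)) x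
    refine (abs_smoothDeriv_pow_le_of_isLagrangeFun_cons hab hs hk hY₀ (by simpa using hY) hl
      hm).trans ?_
    rw [← Multiset.add_cons] at hm hl'
    refine ih (b ::ₘ r) ?_ (hY.trans (by simp [add_assoc])) hm hl'
    rw [Multiset.forall_mem_cons] at hs
    rw [Multiset.add_cons, Multiset.forall_mem_cons]
    exact ⟨hs.1.trans_le hab, hs.2⟩

theorem abs_smoothDeriv_pow_le_of_isLagrangeFun {s' : Multiset ℝ}
    (hrel : Multiset.Rel (· ≤ ·) s s') (hs : ∀ g ∈ s, 0 < g) {k : ℕ} (hk : 1 ≤ k)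
    {Y : Finset ℝ} (hY₀ : ∀ y ∈ Y, 0 ≤ y) (hY : Y.card = s.card) {x : ℝ} {l l' : smoothFun}
    (hl : IsLagrangeFun s Y x l) (hl' : IsLagrangeFun s' Y x l') :
    |(smoothDeriv ^ k) l 0| ≤ |(smoothDeriv ^ k) l' 0| :=
  abs_smoothDeriv_pow_le_of_isLagrangeFun_add hrel 0 (by rwa [add_zero]) hk hY₀ (by rwa [add_zero])
    (by rwa [add_zero]) (by rwa [add_zero])

end Comparison

section Quadrature

open scoped NNReal

theorem exists_quadrature_solSpace {s : Multiset ℝ} {φ : Module.Dual ℝ (solSpace s)} {M M' : ℝ}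
    (hMM' : M < M') (hM : ∀ f : solSpace s, (∀ t, 0 ≤ t → |f.1 t| ≤ 1) → φ f ≤ M) :
    ∃ (Y : Finset ℝ) (c : ℝ → ℝ), Y.card = s.card ∧ (∀ y ∈ Y, 0 ≤ y) ∧ ∑ y ∈ Y, |c y| ≤ M' ∧
      ∀ f : solSpace s, φ f = ∑ y ∈ Y, c y * f.1 y := by
  let toReal : ℝ≥0 ↪ ℝ := ⟨(↑), NNReal.coe_injective⟩
  obtain ⟨Z, hZ⟩ := Infinite.exists_subset_card_eq ℝ≥0 s.card
  obtain ⟨Y, c, hY, hc, hquad⟩ := exists_quadrature_of_forall_le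
    (e := fun t : ℝ≥0 => (evalAt t).domRestrict (solSpace s))
    (fun f hf => Subtype.ext (eq_zero_of_card_le_card_zeros f.2 (Z := Z.map toReal)
      (by rw [Finset.card_map, hZ]) (Finset.forall_mem_map.mpr fun t _ => hf t)))
    hMM' fun f hf => hM f fun t ht => hf ⟨t, ht⟩
  refine ⟨Y.map toReal, fun y => c y.toNNReal, by rw [Finset.card_map, hY, finrank_solSpace],
    Finset.forall_mem_map.mpr fun y _ => y.2, ?_, fun f => ?_⟩
  · simpa [Finset.sum_map, toReal] using hc
  · simpa [Finset.sum_map, toReal, evalAt_apply] using hquad f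

end Quadrature

section Domination

variable {s s' : Multiset ℝ} {k : ℕ} {f : smoothFun} {t : ℝ}

lemma abs_le_supAbs_of_mem_solSpace (hs : ∀ g ∈ s, 0 < g) (hf : f ∈ solSpace s) (ht : 0 ≤ t) :
    |f t| ≤ supAbs f :=
  abs_le_supAbs (continuous_smoothFun f) (tendsto_atTop_of_mem_solSpace hs hf) ht

lemma abs_smoothDeriv_pow_le_sum_mul_supAbs (hs : ∀ g ∈ s, 0 < g) {Y : Finset ℝ}
    (hY₀ : ∀ y ∈ Y, 0 ≤ y) (hY : s.card ≤ Y.card) {l : ℝ → smoothFun}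
    (hl : ∀ x ∈ Y, IsLagrangeFun s Y x (l x)) (hf : f ∈ solSpace s) (ht : 0 ≤ t) :
    |(smoothDeriv ^ k) f t| ≤ (∑ x ∈ Y, |(smoothDeriv ^ k) (l x) 0|) * supAbs f := by
  have hexpand : (smoothDeriv ^ k) f t = ∑ x ∈ Y, f (x + t) * (smoothDeriv ^ k) (l x) 0 := by
    have hLagrange := eq_sum_smul_of_isLagrangeFun hY hl (translate_mem_solSpace t hf)
    apply_fun fun g => evalAt 0 ((smoothDeriv ^ k) g) at hLagrange
    simpa [smoothDeriv_pow_translate, evalAt_apply, translate_apply] using hLagrange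
  calc |(smoothDeriv ^ k) f t| ≤ ∑ x ∈ Y, |f (x + t) * (smoothDeriv ^ k) (l x) 0| :=
        hexpand ▸ Finset.abs_sum_le_sum_abs _ _
    _ ≤ ∑ x ∈ Y, |(smoothDeriv ^ k) (l x) 0| * supAbs f := Finset.sum_le_sum fun x hx => by
        rw [abs_mul, mul_comm]
        gcongr
        exact abs_le_supAbs_of_mem_solSpace hs hf (add_nonneg (hY₀ x hx) ht)
    _ = _ := (Finset.sum_mul ..).symm

lemma exists_abs_smoothDeriv_pow_le_mul_supAbs (hs : ∀ g ∈ s, 0 < g) (k : ℕ) :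
    ∃ B, 0 ≤ B ∧ ∀ f ∈ solSpace s, ∀ t, 0 ≤ t → |(smoothDeriv ^ k) f t| ≤ B * supAbs f := by
  obtain ⟨Y, hY₀, hY⟩ := (Ici_infinite (0 : ℝ)).exists_subset_card_eq s.card
  choose l hl using exists_isLagrangeFun hY
  exact ⟨_, Finset.sum_nonneg fun x _ => abs_nonneg _, fun f hf t ht =>
    abs_smoothDeriv_pow_le_sum_mul_supAbs hs hY₀ hY.ge (fun x _ => hl x) hf ht⟩

lemma exists_isLagrangeFun_sum_abs_le {M M' : ℝ} (hMM' : M < M')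
    (hM : ∀ f ∈ solSpace s, (∀ t, 0 ≤ t → |f t| ≤ 1) → |(smoothDeriv ^ k) f 0| ≤ M) :
    ∃ (Y : Finset ℝ) (l : ℝ → smoothFun), Y.card = s.card ∧ (∀ y ∈ Y, 0 ≤ y) ∧
      (∀ x, IsLagrangeFun s Y x (l x)) ∧ ∑ x ∈ Y, |(smoothDeriv ^ k) (l x) 0| ≤ M' := by
  obtain ⟨Y, c, hY, hY₀, hc, hquad⟩ := exists_quadrature_solSpace
    (φ := (evalAt 0 ∘ₗ smoothDeriv ^ k).domRestrict (solSpace s)) hMM'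
    fun f hf => (le_abs_self _).trans (hM f f.2 hf)
  choose l hl using exists_isLagrangeFun hY
  refine ⟨Y, l, hY, hY₀, hl, (Finset.sum_congr rfl fun x hx => ?_).trans_le hc⟩
  have hweight : (smoothDeriv ^ k) (l x) 0 = ∑ y ∈ Y, c y * l x y := hquad ⟨l x, (hl x).1⟩
  rw [hweight, Finset.sum_congr rfl fun y hy => by rw [(hl x).2 y hy]]
  simp [hx]

theorem abs_smoothDeriv_pow_le_mul_supAbs_of_rel (hrel : Multiset.Rel (· ≤ ·) s s')
    (hs : ∀ g ∈ s, 0 < g) (hk : 1 ≤ k) {M : ℝ}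
    (hM : ∀ f ∈ solSpace s', (∀ t, 0 ≤ t → |f t| ≤ 1) → |(smoothDeriv ^ k) f 0| ≤ M)
    (hf : f ∈ solSpace s) (ht : 0 ≤ t) :
    |(smoothDeriv ^ k) f t| ≤ M * supAbs f := by
  refine le_mul_of_forall_lt₀ fun M' hM' S hS => ?_
  obtain ⟨Y, l', hY, hY₀, hl', hsum⟩ := exists_isLagrangeFun_sum_abs_le hM' hM
  have hYs : Y.card = s.card := hY.trans (Multiset.card_eq_card_of_rel hrel).symm
  choose l hl using exists_isLagrangeFun hYs
  have hsum_le : ∑ x ∈ Y, |(smoothDeriv ^ k) (l x) 0| ≤ M' :=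
    (Finset.sum_le_sum fun x _ =>
      abs_smoothDeriv_pow_le_of_isLagrangeFun hrel hs hk hY₀ hYs (hl x) (hl' x)).trans hsum
  calc |(smoothDeriv ^ k) f t| ≤ (∑ x ∈ Y, |(smoothDeriv ^ k) (l x) 0|) * supAbs f :=
        abs_smoothDeriv_pow_le_sum_mul_supAbs hs hY₀ hYs.ge (fun x _ => hl x) hf ht
    _ ≤ M' * S := mul_le_mul hsum_le hS.le (supAbs_nonneg f)
        ((Finset.sum_nonneg fun x _ => abs_nonneg _).trans hsum_le)

end Domination

section Extremal

lemma expMul_one_coe (q : ℝ[X]) : ⇑(expMul 1 q) = fun t => Real.exp (-t) * q.eval t := by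
  funext t
  rw [expMul_apply, neg_one_mul]

lemma expMul_mem_solSpace_replicate {d : ℕ} (hd : 1 ≤ d) (g : ℝ) {q : ℝ[X]}
    (hq : q.natDegree ≤ d - 1) : expMul g q ∈ solSpace (Multiset.replicate d g) :=
  expMul_mem_solSpace (charPoly_replicate d g).symm.dvd (by lia)

lemma supAbs_smoothDeriv_pow_expMul_le_Mkd {d : ℕ} (hd : 1 ≤ d) (k : ℕ) {q : ℝ[X]}
    (hq : q.natDegree ≤ d - 1) (hq₁ : supAbs (expMul 1 q) ≤ 1) :
    supAbs ((smoothDeriv ^ k) (expMul 1 q)) ≤ Mkd k d := by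
  obtain ⟨B, hB₀, hB⟩ := exists_abs_smoothDeriv_pow_le_mul_supAbs
    (s := Multiset.replicate d 1) (fun g hg => Multiset.eq_of_mem_replicate hg ▸ one_pos) k
  refine le_csSup ⟨B, ?_⟩ ⟨q, hq, expMul_one_coe q ▸ hq₁, ?_⟩
  · rintro _ ⟨r, hr, hr₁, rfl⟩
    rw [← expMul_one_coe] at hr₁ ⊢
    rw [← smoothDeriv_pow_apply]
    exact supAbs_le fun t ht => (hB _ (expMul_mem_solSpace_replicate hd 1 hr) t ht).trans
      (mul_le_of_le_one_right hB₀ hr₁)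
  · rw [smoothDeriv_pow_apply, expMul_one_coe]

lemma abs_smoothDeriv_pow_zero_le_Mkd {d : ℕ} (hd : 1 ≤ d) (k : ℕ) {f : smoothFun}
    (hf : f ∈ solSpace (Multiset.replicate d 1)) (hf₁ : ∀ t, 0 ≤ t → |f t| ≤ 1) :
    |(smoothDeriv ^ k) f 0| ≤ Mkd k d := by
  obtain ⟨q, hq, rfl⟩ := exists_expMul_eq_of_mem_solSpace_replicate hf
  have hdeg : q.natDegree ≤ d - 1 := natDegree_le_iff_coeff_eq_zero.mpr fun n hn =>
    coeff_eq_zero_of_degree_lt (hq.trans_le (by exact_mod_cast Nat.le_of_pred_lt hn))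
  refine (abs_le_supAbs_of_mem_solSpace (s := Multiset.replicate d 1)
    (fun g hg => Multiset.eq_of_mem_replicate hg ▸ one_pos)
    (smoothDeriv_pow_mem_solSpace k hf) le_rfl).trans ?_
  exact supAbs_smoothDeriv_pow_expMul_le_Mkd hd k hdeg (supAbs_le hf₁)

lemma X_add_C_pow_dvd_charPoly_map {d : ℕ} (h : Fin d → ℝ) (i : Fin d) :
    (X + C (h i)) ^ (Nat.card {j : Fin d // j < i ∧ h j = h i} + 1) ∣
      charPoly (Finset.univ.val.map h) := by
  let S : Finset (Fin d) := insert i (Finset.univ.filter fun j => j < i ∧ h j = h i)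
  have hcard : S.card = Nat.card {j : Fin d // j < i ∧ h j = h i} + 1 := by
    rw [Finset.card_insert_of_notMem (by simp), Nat.card_eq_fintype_card, Fintype.card_subtype]
  have hprod : ∏ j ∈ S, (X + C (h j)) = (X + C (h i)) ^ S.card :=
    Finset.prod_eq_pow_card (by simp +contextual [S])
  have huniv : charPoly (Finset.univ.val.map h) = ∏ j, (X + C (h j)) := by
    rw [charPoly, Multiset.map_map]; rfl
  rw [← hcard, ← hprod, huniv]
  exact Finset.prod_dvd_prod_of_subset _ _ _ (Finset.subset_univ S)

lemma exists_mem_solSpace_eq_of_mem_expPoly {d : ℕ} {h : Fin d → ℝ} {p : ℝ → ℝ}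
    (hp : p ∈ expPoly d h) : ∃ f ∈ solSpace (Finset.univ.val.map h), ⇑f = p := by
  obtain ⟨c, hc⟩ := hp
  refine ⟨∑ i, c i • expMul (h i) (X ^ Nat.card {j : Fin d // j < i ∧ h j = h i}),
    sum_mem fun i _ => Submodule.smul_mem _ _
      (expMul_mem_solSpace (X_add_C_pow_dvd_charPoly_map h i) (by simp)), ?_⟩
  funext t
  rw [hc, ← evalAt_apply, map_sum]
  refine Finset.sum_congr rfl fun i _ => ?_
  rw [map_smul, evalAt_apply, expMul_apply, eval_pow, eval_X, smul_eq_mul]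
  ring

end Extremal

end MarkovBernstein

/-- Uniform Markov–Bernstein inequality for exponential polynomials:
for `0 < h₁ ≤ ⋯ ≤ h_d ≤ 1` and `p ∈ P_h`,
`sup_{t ≥ 0} |p⁽ᵏ⁾(t)| ≤ M_{k,d} · sup_{t ≥ 0} |p(t)|`. -/
theorem markov_bernstein_uniform (d k : ℕ) (hd : 1 ≤ d) (hk : 1 ≤ k)
    (h : Fin d → ℝ) (hmono : Monotone h) (hpos : ∀ i, 0 < h i) (hone : ∀ i, h i ≤ 1)
    (p : ℝ → ℝ) (hp : p ∈ expPoly d h) :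
    ∀ t : ℝ, 0 ≤ t → |iteratedDeriv k p t| ≤ Mkd k d * supAbs p := by
  intro t ht
  obtain ⟨f, hf, rfl⟩ := MarkovBernstein.exists_mem_solSpace_eq_of_mem_expPoly hp
  have hrel : Multiset.Rel (· ≤ ·) (Finset.univ.val.map h) (Multiset.replicate d 1) :=
    Multiset.rel_replicate_right.mpr ⟨by simp, by simpa using hone⟩
  rw [← MarkovBernstein.smoothDeriv_pow_apply]
  exact MarkovBernstein.abs_smoothDeriv_pow_le_mul_supAbs_of_rel hrel (by simpa using hpos) hk
    (fun _ => MarkovBernstein.abs_smoothDeriv_pow_zero_le_Mkd hd k) hf ht
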